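/- arXiv:2210.10777 — 5 statements merged into one kernel-verified Lean document; each statement's English description precedes it below -/
import Mathlib

section
/- Let m ≥ 1 and let t ∈ {0,1}^m. For binary symmetric matrices P, P' ∈ {0,1}^{m×m} and binary vectors b, b' ∈ {0,1}^m, define ψ_{(P,b)}(t) = i^{wt(d_P) + 2·wt(b)} · i^{t P tᵀ + 2·(b·t)} ∈ ℂ, where all exponents are computed as integers. Then the pointwise product satisfies ψ_{(P,b)}(t) · ψ_{(P',b')}(t) = ψ_{(P ⊕ P', b ⊕ b' ⊕ (d_P * d_{P'}))}(t). In particular, the unnormalized columns of the Delsarte–Goethals frame are closed under pointwise multiplication. -/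
/-!
Since `i ^ 4 = 1`, it suffices to compare exponents in `ZMod 4`. For bits,
`x + y = (x ⊕ y) + 2xy`, hence `2(x ⊕ y) = 2(x + y)` modulo 4. Summing the first identity over the
diagonal of `P, P'` produces the correction `2 ∑ d_P d_{P'}`, matched by the weight of
`d_P * d_{P'}` in the new vector. In the quadratic form the correction is
`2 ∑ t_j t_k P_{jk} P'_{jk}`; by symmetry its off-diagonal terms pair up to multiples of 4
(`two_mul_sum_symm`), leaving `2 ∑ t_j d_P d_{P'}`, which is the extra term in the dot product.
-/

open Finset

/-- Cast a bit to a natural number. -/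
def bnat (x : Bool) : ℕ := if x then 1 else 0

/-- Hamming weight of a binary vector. -/
def wt {m : ℕ} (x : Fin m → Bool) : ℕ := ∑ j, bnat (x j)

/-- Quadratic form `t P tᵀ` computed over the integers (naturals). -/
def quadForm {m : ℕ} (P : Fin m → Fin m → Bool) (t : Fin m → Bool) : ℕ :=
  ∑ j, ∑ k, bnat (t j) * bnat (P j k) * bnat (t k)

/-- Dot product `b · t` computed over the integers (naturals). -/
def bdot {m : ℕ} (b t : Fin m → Bool) : ℕ := ∑ j, bnat (b j) * bnat (t j)

/-- Diagonal of a binary matrix. -/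
def dgDiag {m : ℕ} (P : Fin m → Fin m → Bool) : Fin m → Bool := fun j => P j j

/-- Unnormalized column entry of the Delsarte–Goethals frame:
`ψ_{(P,b)}(t) = i^{wt(d_P) + 2·wt(b)} · i^{t P tᵀ + 2·(b·t)}`. -/
noncomputable def dgPsi {m : ℕ} (P : Fin m → Fin m → Bool) (b : Fin m → Bool)
    (t : Fin m → Bool) : ℂ :=
  Complex.I ^ (wt (dgDiag P) + 2 * wt b) * Complex.I ^ (quadForm P t + 2 * bdot b t)

lemma I_pow_congr {a b : ℕ} (h : (a : ZMod 4) = b) : Complex.I ^ a = Complex.I ^ b := by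
  have h' : a % 4 = b % 4 := (ZMod.natCast_eq_natCast_iff a b 4).1 h
  rw [pow_eq_pow_mod a Complex.I_pow_four, pow_eq_pow_mod b Complex.I_pow_four, h']

lemma bnat_xor_cast (x y : Bool) :
    (bnat (xor x y) : ZMod 4) = bnat x + bnat y + 2 * (bnat x * bnat y) := by
  cases x <;> cases y <;> decide

lemma two_mul_bnat_xor_and_cast (x y p q : Bool) :
    (2 * bnat (xor (xor x y) (p && q)) : ZMod 4)
      = 2 * bnat x + 2 * bnat y + 2 * (bnat p * bnat q) := by
  cases x <;> cases y <;> cases p <;> cases q <;> decide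

lemma bnat_mul_self_cast (x : Bool) : (bnat x * bnat x : ZMod 4) = bnat x := by
  cases x <;> decide

lemma four_mul_cast (x : ZMod 4) : 4 * x = 0 := by
  rw [show (4 : ZMod 4) = 0 from by decide, zero_mul]

/-- Twice the sum of a symmetric array is, modulo 4, twice its trace: the entries at `(j, k)` and
`(k, j)` with `j ≠ k` cancel. -/
lemma two_mul_sum_symm {m : ℕ} (f : Fin m → Fin m → ZMod 4) (hf : ∀ j k, f j k = f k j) :
    ∑ j, ∑ k, 2 * f j k = ∑ j, 2 * f j j := by
  rw [← Finset.sum_product', ← Finset.diag_union_offDiag,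
    Finset.sum_union (Finset.disjoint_diag_offDiag _), Finset.sum_diag]
  have h : ∑ x ∈ (univ : Finset (Fin m)).offDiag, 2 * f x.1 x.2 = 0 := by
    refine Finset.sum_involution (fun x _ => x.swap) ?_ ?_ ?_ ?_
    · intro x _
      have := four_mul_cast (f x.1 x.2)
      simp only [Prod.fst_swap, Prod.snd_swap, hf x.2 x.1]
      linear_combination this
    · intro x hx _ h
      exact (Finset.mem_offDiag.1 hx).2.2 (congrArg Prod.snd h)
    · intro x hx
      have := (Finset.mem_offDiag.1 hx).2.2
      simpa using this.symm
    · intro x _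
      exact Prod.swap_swap x
  rw [h, add_zero]

/-- The exponent of the prefactor, modulo 4. -/
lemma prefactor_cast {m : ℕ} (d d' b b' : Fin m → Bool) :
    ((wt (fun j => xor (d j) (d' j))
        + 2 * wt (fun j => xor (xor (b j) (b' j)) (d j && d' j)) : ℕ) : ZMod 4)
      = ((wt d + 2 * wt b + (wt d' + 2 * wt b') : ℕ) : ZMod 4) := by
  simp only [wt]
  push_cast
  simp only [Finset.mul_sum, ← Finset.sum_add_distrib]
  refine Finset.sum_congr rfl fun j _ => ?_
  have h := four_mul_cast (bnat (d j) * bnat (d' j))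
  rw [bnat_xor_cast, two_mul_bnat_xor_and_cast]
  linear_combination h

lemma quadForm_xor_cast {m : ℕ} (P P' : Fin m → Fin m → Bool) (t : Fin m → Bool)
    (hP : ∀ j k, P j k = P k j) (hP' : ∀ j k, P' j k = P' k j) :
    (quadForm (fun j k => xor (P j k) (P' j k)) t : ZMod 4)
      = quadForm P t + quadForm P' t
        + ∑ j, 2 * (bnat (t j) * (bnat (P j j) * bnat (P' j j)) : ZMod 4) := by
  have h := two_mul_sum_symm
    (fun j k => (bnat (t j) * (bnat (P j k) * bnat (P' j k)) * bnat (t k) : ZMod 4))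
    (fun j k => by rw [hP j k, hP' j k]; ring)
  have hd : ∑ j, 2 * (bnat (t j) * (bnat (P j j) * bnat (P' j j)) : ZMod 4)
      = ∑ j, 2 * (bnat (t j) * (bnat (P j j) * bnat (P' j j)) * bnat (t j) : ZMod 4) := by
    refine Finset.sum_congr rfl fun j _ => ?_
    linear_combination -2 * (bnat (P j j) * bnat (P' j j) : ZMod 4) * bnat_mul_self_cast (t j)
  rw [hd, ← h]
  simp only [quadForm]
  push_cast
  simp only [← Finset.sum_add_distrib]
  refine Finset.sum_congr rfl fun j _ => Finset.sum_congr rfl fun k _ => ?_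
  rw [bnat_xor_cast]
  ring

lemma two_mul_bdot_xor_and_cast {m : ℕ} (d d' b b' t : Fin m → Bool) :
    (2 * bdot (fun j => xor (xor (b j) (b' j)) (d j && d' j)) t : ZMod 4)
      = 2 * bdot b t + 2 * bdot b' t
        + ∑ j, 2 * (bnat (t j) * (bnat (d j) * bnat (d' j)) : ZMod 4) := by
  simp only [bdot]
  push_cast
  simp only [Finset.mul_sum, ← Finset.sum_add_distrib]
  refine Finset.sum_congr rfl fun j _ => ?_
  rw [← mul_assoc, two_mul_bnat_xor_and_cast]
  ring

/-- The pointwise product of unnormalized Delsarte–Goethals columns satisfies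
`ψ_{(P,b)}(t) · ψ_{(P',b')}(t) = ψ_{(P ⊕ P', b ⊕ b' ⊕ d_P * d_{P'})}(t)`;
in particular the columns are closed under pointwise multiplication. -/
theorem dgPsi_mul {m : ℕ} (hm : 1 ≤ m) (t : Fin m → Bool)
    (P P' : Fin m → Fin m → Bool)
    (hP : ∀ j k, P j k = P k j) (hP' : ∀ j k, P' j k = P' k j)
    (b b' : Fin m → Bool) :
    dgPsi P b t * dgPsi P' b' t =
      dgPsi (fun j k => xor (P j k) (P' j k))
        (fun j => xor (xor (b j) (b' j)) (dgDiag P j && dgDiag P' j)) t := by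
  have hpre := prefactor_cast (dgDiag P) (dgDiag P') b b'
  have hquad := quadForm_xor_cast P P' t hP hP'
  have hdot := two_mul_bdot_xor_and_cast (dgDiag P) (dgDiag P') b b' t
  have hmain : ((quadForm (fun j k => xor (P j k) (P' j k)) t
      + 2 * bdot (fun j => xor (xor (b j) (b' j)) (dgDiag P j && dgDiag P' j)) t : ℕ) : ZMod 4)
      = ((quadForm P t + 2 * bdot b t + (quadForm P' t + 2 * bdot b' t) : ℕ) : ZMod 4) := by
    have h4 := four_mul_cast (∑ j, (bnat (t j) * (bnat (P j j) * bnat (P' j j)) : ZMod 4))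
    push_cast
    rw [hquad, hdot]
    simp only [dgDiag, ← Finset.mul_sum]
    linear_combination h4
  unfold dgPsi
  rw [mul_mul_mul_comm, ← pow_add, ← pow_add, I_pow_congr hmain]
  exact congrArg (· * _) (I_pow_congr hpre).symm
end

section
/- Let m ≥ 1, let P, P' ∈ {0,1}^{m×m} be binary symmetric matrices and let t ∈ {0,1}^m. Then, computing over the integers, t P tᵀ + t P' tᵀ ≡ t (P ⊕ P') tᵀ + 2·((d_P * d_{P'}) · t) (mod 4), where P ⊕ P' is the entrywise XOR, d_P and d_{P'} are the diagonals of P and P', and * is the entrywise product. -/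
/-!
Over the integers, bits satisfy `x + y = (x ⊕ y) + 2 x y`, so entrywise
`t P tᵀ + t P' tᵀ = t (P ⊕ P') tᵀ + 2 · t (P ∧ P') tᵀ` holds exactly (`quadForm_add_eq`).
The matrix `P ∧ P'` is again symmetric, so in `t (P ∧ P') tᵀ` the off-diagonal terms pair up and
vanish modulo 2 (`quadForm_modEq_bdot`), leaving `(d_P * d_{P'}) · t`. Doubling turns this into a
congruence modulo 4.
-/

open Finset

/-- The bitwise identity `x + y = (x ⊕ y) + 2 (x ∧ y)` summed against `t_j t_k`. -/
lemma quadForm_add_eq {m : ℕ} (P P' : Fin m → Fin m → Bool) (t : Fin m → Bool) :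
    quadForm P t + quadForm P' t =
      quadForm (fun j k => xor (P j k) (P' j k)) t +
        2 * quadForm (fun j k => P j k && P' j k) t := by
  simp only [quadForm, Finset.mul_sum, ← Finset.sum_add_distrib]
  refine Finset.sum_congr rfl fun j _ => Finset.sum_congr rfl fun k _ => ?_
  cases P j k <;> cases P' j k <;> cases t j <;> cases t k <;> simp [bnat]

/-- In characteristic 2 the off-diagonal terms of a symmetric double sum cancel in pairs. -/
lemma sum_sum_eq_sum_diag {ι : Type*} [Fintype ι] [DecidableEq ι] (f : ι → ι → ZMod 2)
    (hf : ∀ j k, f j k = f k j) : ∑ j, ∑ k, f j k = ∑ j, f j j := by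
  have h : ∑ p : ι × ι, (if p.1 = p.2 then 0 else f p.1 p.2) = 0 := by
    refine Finset.sum_involution (fun p _ => p.swap) ?_ ?_ ?_ ?_
    · rintro ⟨j, k⟩ -
      by_cases hjk : j = k
      · simp [hjk]
      · simp [hjk, Ne.symm hjk, hf k j, CharTwo.add_self_eq_zero]
    · rintro ⟨j, k⟩ - hne heq
      simp only [Prod.swap_prod_mk, Prod.mk.injEq] at heq
      simp [heq.2] at hne
    · simp
    · simp
  rw [Fintype.sum_prod_type] at h
  have hsplit : ∀ j k, f j k = (if j = k then f j k else 0) + (if j = k then 0 else f j k) := by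
    intro j k
    split_ifs <;> simp
  calc ∑ j, ∑ k, f j k
      = ∑ j, ∑ k, ((if j = k then f j k else 0) + (if j = k then 0 else f j k)) :=
        Finset.sum_congr rfl fun j _ => Finset.sum_congr rfl fun k _ => hsplit j k
    _ = ∑ j, f j j := by
        simp only [Finset.sum_add_distrib]
        rw [h]
        simp

lemma quadForm_modEq_bdot {m : ℕ} (Q : Fin m → Fin m → Bool) (hQ : ∀ j k, Q j k = Q k j)
    (t : Fin m → Bool) : quadForm Q t ≡ bdot (dgDiag Q) t [MOD 2] := by
  rw [← ZMod.natCast_eq_natCast_iff]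
  simp only [quadForm, bdot, dgDiag, Nat.cast_sum]
  rw [sum_sum_eq_sum_diag]
  · refine Finset.sum_congr rfl fun j _ => ?_
    cases t j <;> simp [bnat]
  · intro j k
    rw [hQ j k]
    congr 1
    ring

/-- For binary symmetric matrices `P, P'` and a binary vector `t`,
`t P tᵀ + t P' tᵀ ≡ t (P ⊕ P') tᵀ + 2·((d_P * d_{P'}) · t) (mod 4)`
computed over the integers. -/
theorem quadForm_add_modEq {m : ℕ} (hm : 1 ≤ m)
    (P P' : Fin m → Fin m → Bool)
    (hP : ∀ j k, P j k = P k j) (hP' : ∀ j k, P' j k = P' k j)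
    (t : Fin m → Bool) :
    quadForm P t + quadForm P' t ≡
      quadForm (fun j k => xor (P j k) (P' j k)) t +
        2 * bdot (fun j => dgDiag P j && dgDiag P' j) t [MOD 4] := by
  rw [quadForm_add_eq]
  refine Nat.ModEq.add_left _ ?_
  exact Nat.ModEq.mul_left' 2
    (quadForm_modEq_bdot (fun j k => P j k && P' j k) (fun j k => by simp only [hP j k, hP' j k]) t)
end

section
/- Let m ≥ 1 and let S be any nonempty finite set of binary symmetric matrices P ∈ {0,1}^{m×m}. For binary symmetric P and b ∈ {0,1}^m, define ψ_{(P,b)}(t) = i^{wt(d_P) + 2·wt(b)} · i^{t P tᵀ + 2·(b·t)} ∈ ℂ for t ∈ {0,1}^m, where all exponents are computed as integers. Then for all t, t' ∈ {0,1}^m: Σ_{P ∈ S} Σ_{b ∈ {0,1}^m} ψ_{(P,b)}(t) · conj(ψ_{(P,b)}(t')) equals 0 if t ≠ t', and equals |S| · 2^m if t = t'. In particular, the rows of the Delsarte–Goethals frame G(m,r) are pairwise orthogonal with equal norms, so G(m,r) is a tight frame. -/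
/-!
Since `I ^ (2 * n) = (-1) ^ n` and `|I ^ n| = 1`, the prefactor of `ψ` cancels against its
conjugate, so `ψ_{(P,b)}(t) · conj ψ_{(P,b)}(t')` is a constant independent of `b` times the
character sign `∏ j, (-1) ^ (b j * (t j + t' j))` (`dgPsi_mul_conj`). Summing that sign over `b`
factors over the coordinates; the `j`-th factor is `1 + (-1) ^ (t j + t' j)`, which is `2` if
`t j = t' j` and `0` otherwise (`sum_sign`). Hence the inner sum over `b` is already `0` for
`t ≠ t'` and `2 ^ m` for `t = t'`, for each matrix `P`.
-/

open Finset

theorem I_pow_mul_conj (n : ℕ) : Complex.I ^ n * starRingEnd ℂ (Complex.I ^ n) = 1 := by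
  rw [map_pow, ← mul_pow, Complex.conj_I]
  simp

theorem I_pow_two_mul (n : ℕ) : Complex.I ^ (2 * n) = (-1) ^ n := by
  rw [pow_mul, Complex.I_sq]

/-- The `b`-dependence of the product of two entries in one column is a real character sign. -/
theorem dgPsi_mul_conj {m : ℕ} (P : Fin m → Fin m → Bool) (b t t' : Fin m → Bool) :
    dgPsi P b t * starRingEnd ℂ (dgPsi P b t') =
      Complex.I ^ quadForm P t * starRingEnd ℂ (Complex.I ^ quadForm P t') *
        ∏ j, (-1 : ℂ) ^ (bnat (b j) * (bnat (t j) + bnat (t' j))) := by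
  have hsign : ∏ j, (-1 : ℂ) ^ (bnat (b j) * (bnat (t j) + bnat (t' j))) =
      (-1) ^ bdot b t * (-1) ^ bdot b t' := by
    rw [Finset.prod_pow_eq_pow_sum, ← pow_add, bdot, bdot, ← Finset.sum_add_distrib]
    simp only [mul_add]
  have hconj : ∀ n : ℕ, starRingEnd ℂ ((-1) ^ n) = (-1) ^ n := fun n => by simp
  have hpre := I_pow_mul_conj (wt (dgDiag P) + 2 * wt b)
  rw [hsign, dgPsi, dgPsi, map_mul, pow_add _ (quadForm P t), pow_add _ (quadForm P t'),
    I_pow_two_mul (bdot b t), I_pow_two_mul (bdot b t'), map_mul, hconj]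
  linear_combination (Complex.I ^ quadForm P t * (-1) ^ bdot b t *
    (starRingEnd ℂ (Complex.I ^ quadForm P t') * (-1) ^ bdot b t')) * hpre

/-- Orthogonality of the characters of `{0,1}^m`. -/
theorem sum_sign {m : ℕ} (t t' : Fin m → Bool) :
    ∑ b : Fin m → Bool, ∏ j, (-1 : ℂ) ^ (bnat (b j) * (bnat (t j) + bnat (t' j))) =
      if t = t' then 2 ^ m else 0 := by
  have hfactor : ∀ u v : Bool,
      ∑ x : Bool, (-1 : ℂ) ^ (bnat x * (bnat u + bnat v)) = if u = v then 2 else 0 := by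
    intro u v
    cases u <;> cases v <;> norm_num [bnat]
  rw [← Fintype.prod_sum (fun j (x : Bool) => (-1 : ℂ) ^ (bnat x * (bnat (t j) + bnat (t' j))))]
  simp only [hfactor]
  split_ifs with h
  · simp [h]
  · obtain ⟨j, hj⟩ := Function.ne_iff.mp h
    exact Finset.prod_eq_zero (Finset.mem_univ j) (if_neg hj)

/-- For any nonempty finite set `S` of binary symmetric matrices, and any rows `t, t'`,
`Σ_{P ∈ S} Σ_{b} ψ_{(P,b)}(t) · conj(ψ_{(P,b)}(t'))` equals `0` if `t ≠ t'` and
`|S| · 2^m` if `t = t'`: the rows of the Delsarte–Goethals frame are pairwise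
orthogonal with equal norms, so it is a tight frame. -/
theorem dg_rows_orthogonal {m : ℕ} (hm : 1 ≤ m)
    (S : Finset (Fin m → Fin m → Bool)) (hS : S.Nonempty)
    (hsym : ∀ P ∈ S, ∀ j k, P j k = P k j)
    (t t' : Fin m → Bool) :
    (∑ P ∈ S, ∑ b : Fin m → Bool, dgPsi P b t * starRingEnd ℂ (dgPsi P b t')) =
      if t = t' then ((S.card : ℂ) * 2 ^ m) else 0 := by
  simp only [dgPsi_mul_conj, ← Finset.mul_sum, sum_sign]
  split_ifs with h
  · subst h
    simp [-map_pow, I_pow_mul_conj]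
  · simp
end

section
/- Let A be an m × n real matrix satisfying the Restricted Isometry Property of order 2k with constant ε ∈ (0,1). Let x, x' ∈ ℝⁿ be k-sparse vectors with ‖x‖₂ ≤ R and ‖x'‖₂ ≤ R. Then |⟨Ax, Ax'⟩ − ⟨x, x'⟩| ≤ 2R²ε; in particular ⟨x,x'⟩ − 2R²ε ≤ ⟨Ax, Ax'⟩ ≤ ⟨x,x'⟩ + 2R²ε. -/
/-!
The vectors `x + x'` and `x - x'` are `2k`-sparse, so the RIP controls `‖A(x ± x')‖²` up to an error
`ε‖x ± x'‖²`. By polarization, `4⟪Ax, Ax'⟫ = ‖A(x + x')‖² - ‖A(x - x')‖²` differs from `4⟪x, x'⟫` by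
at most `ε(‖x + x'‖² + ‖x - x'‖²) = 2ε(‖x‖² + ‖x'‖²) ≤ 4R²ε`. This even gives the bound `R²ε`, which
is stronger than the claimed `2R²ε`.
-/

open Finset RealInnerProductSpace

/-- A vector is `s`-sparse if it has at most `s` nonzero coordinates. -/
def SparseVec {n : ℕ} (s : ℕ) (x : EuclideanSpace ℝ (Fin n)) : Prop :=
  (Finset.univ.filter fun i => x i ≠ 0).card ≤ s

/-- Application of a matrix to a Euclidean vector. -/
noncomputable def matVec {m n : ℕ} (A : Matrix (Fin m) (Fin n) ℝ)
    (x : EuclideanSpace ℝ (Fin n)) : EuclideanSpace ℝ (Fin m) :=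
  (EuclideanSpace.equiv (Fin m) ℝ).symm (A.mulVec ((EuclideanSpace.equiv (Fin n) ℝ) x))

/-- `A` satisfies the Restricted Isometry Property of order `s` with constant `ε`:
for every `s`-sparse `v`, `(1−ε)‖v‖² ≤ ‖Av‖² ≤ (1+ε)‖v‖²`. -/
def IsRIP {m n : ℕ} (s : ℕ) (ε : ℝ) (A : Matrix (Fin m) (Fin n) ℝ) : Prop :=
  ∀ v : EuclideanSpace ℝ (Fin n), SparseVec s v →
    (1 - ε) * ‖v‖ ^ 2 ≤ ‖matVec A v‖ ^ 2 ∧ ‖matVec A v‖ ^ 2 ≤ (1 + ε) * ‖v‖ ^ 2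

theorem matVec_add {m n : ℕ} (A : Matrix (Fin m) (Fin n) ℝ) (x y : EuclideanSpace ℝ (Fin n)) :
    matVec A (x + y) = matVec A x + matVec A y := by
  simp [matVec, Matrix.mulVec_add]

theorem matVec_sub {m n : ℕ} (A : Matrix (Fin m) (Fin n) ℝ) (x y : EuclideanSpace ℝ (Fin n)) :
    matVec A (x - y) = matVec A x - matVec A y := by
  simp [matVec, Matrix.mulVec_sub]

/-- A vector supported in the union of the supports of two `k`-sparse vectors is `2k`-sparse. -/
theorem SparseVec.of_support_subset_union {n k : ℕ} {x y z : EuclideanSpace ℝ (Fin n)}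
    (hx : SparseVec k x) (hy : SparseVec k y) (h : ∀ i, z i ≠ 0 → x i ≠ 0 ∨ y i ≠ 0) :
    SparseVec (2 * k) z := by
  unfold SparseVec at *
  have hsub : (univ.filter fun i => z i ≠ 0) ⊆
      (univ.filter fun i => x i ≠ 0) ∪ (univ.filter fun i => y i ≠ 0) := by
    intro i hi
    simpa using h i (by simpa using hi)
  have h1 := card_le_card hsub
  have h2 := card_union_le (univ.filter fun i => x i ≠ 0) (univ.filter fun i => y i ≠ 0)
  omega

/-- If `A` satisfies the RIP of order `2k` with constant `ε ∈ (0,1)` and `x, x'` are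
`k`-sparse with norms at most `R`, then `|⟨Ax, Ax'⟩ − ⟨x, x'⟩| ≤ 2R²ε`; in particular
`⟨x,x'⟩ − 2R²ε ≤ ⟨Ax, Ax'⟩ ≤ ⟨x,x'⟩ + 2R²ε`. -/
theorem rip_inner_product_preservation {m n k : ℕ} (ε : ℝ) (hε0 : 0 < ε) (hε1 : ε < 1)
    (A : Matrix (Fin m) (Fin n) ℝ) (hA : IsRIP (2 * k) ε A)
    (R : ℝ) (x x' : EuclideanSpace ℝ (Fin n))
    (hx : SparseVec k x) (hx' : SparseVec k x')
    (hxR : ‖x‖ ≤ R) (hx'R : ‖x'‖ ≤ R) :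
    |⟪matVec A x, matVec A x'⟫ - ⟪x, x'⟫| ≤ 2 * R ^ 2 * ε ∧
      ⟪x, x'⟫ - 2 * R ^ 2 * ε ≤ ⟪matVec A x, matVec A x'⟫ ∧
      ⟪matVec A x, matVec A x'⟫ ≤ ⟪x, x'⟫ + 2 * R ^ 2 * ε := by
  have hadd : SparseVec (2 * k) (x + x') := hx.of_support_subset_union hx' fun i hi => by
    by_contra! h
    exact hi (by simp [h.1, h.2])
  have hsub : SparseVec (2 * k) (x - x') := hx.of_support_subset_union hx' fun i hi => by
    by_contra! h
    exact hi (by simp [h.1, h.2])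
  obtain ⟨ha1, ha2⟩ := hA _ hadd
  obtain ⟨hs1, hs2⟩ := hA _ hsub
  rw [matVec_add, norm_add_sq_real, norm_add_sq_real] at ha1 ha2
  rw [matVec_sub, norm_sub_sq_real, norm_sub_sq_real] at hs1 hs2
  have h1 : ε * ‖x‖ ^ 2 ≤ ε * R ^ 2 := by gcongr
  have h2 : ε * ‖x'‖ ^ 2 ≤ ε * R ^ 2 := by gcongr
  have h3 : 0 ≤ ε * R ^ 2 := by positivity
  have hupper : ⟪matVec A x, matVec A x'⟫ ≤ ⟪x, x'⟫ + 2 * R ^ 2 * ε := by linarith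
  have hlower : ⟪x, x'⟫ - 2 * R ^ 2 * ε ≤ ⟪matVec A x, matVec A x'⟫ := by linarith
  exact ⟨abs_le.mpr ⟨by linarith, by linarith⟩, hlower, hupper⟩
end

section
/- Let A be an m × n real matrix satisfying the Restricted Isometry Property of order 2k with constant ε ∈ (0,1). Let (x₁,y₁),…,(x_M,y_M) and (x'₁,y'₁),…,(x'_N,y'_N) be pairs with each xᵢ, x'ⱼ ∈ ℝⁿ k-sparse with Euclidean norm at most R, and each yᵢ, y'ⱼ ∈ {−1,1}. Let α₁,…,α_M, β₁,…,β_N be nonnegative reals with Σᵢ αᵢ ≤ C and Σⱼ βⱼ ≤ D. Set α = Σᵢ αᵢ yᵢ xᵢ and β = Σⱼ βⱼ y'ⱼ x'ⱼ. Then |⟨β, α⟩ − ⟨Aβ, Aα⟩| ≤ 3 C D R² ε. -/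
/-!
The defect `⟪u, v⟫ - ⟪Au, Av⟫` is bilinear in `(u, v)`. For `k`-sparse `u`, `v` the vectors `u ± v`
are `2k`-sparse, so polarization, RIP and the parallelogram law bound the defect by
`ε (‖u‖² + ‖v‖²) / 2 ≤ R² ε` (`abs_defect_le`). Expanding both combinations bilinearly and using the
triangle inequality gives the bound `(∑ β) (∑ α) R² ε ≤ C D R² ε`, which is even better than the
claimed one.
-/

open Finset RealInnerProductSpace

/-- `matVec A` as a linear map. -/
noncomputable def matVecLin {m n : ℕ} (A : Matrix (Fin m) (Fin n) ℝ) :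
    EuclideanSpace ℝ (Fin n) →ₗ[ℝ] EuclideanSpace ℝ (Fin m) where
  toFun := matVec A
  map_add' u v := by simp [matVec, Matrix.mulVec_add]
  map_smul' c u := by simp [matVec, Matrix.mulVec_smul]

lemma sparseVec_add {n k : ℕ} {u v : EuclideanSpace ℝ (Fin n)}
    (hu : SparseVec k u) (hv : SparseVec k v) : SparseVec (2 * k) (u + v) := by
  unfold SparseVec at *
  have hsub : (univ.filter fun i => (u + v) i ≠ 0) ⊆
      (univ.filter fun i => u i ≠ 0) ∪ (univ.filter fun i => v i ≠ 0) := by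
    intro i hi
    have hi' : u i + v i ≠ 0 := (mem_filter.mp hi).2
    simp only [mem_filter, mem_univ, true_and, mem_union]
    by_contra! h
    exact hi' (by rw [h.1, h.2, add_zero])
  have h1 := card_le_card hsub
  have h2 := card_union_le (univ.filter fun i => u i ≠ 0) (univ.filter fun i => v i ≠ 0)
  omega

lemma sparseVec_neg {n k : ℕ} {u : EuclideanSpace ℝ (Fin n)}
    (hu : SparseVec k u) : SparseVec k (-u) := by
  simpa [SparseVec] using hu

/-- RIP of order `2k` nearly preserves inner products of `k`-sparse vectors, by polarization. -/
lemma abs_defect_le {m n k : ℕ} {ε R : ℝ} (hε0 : 0 < ε) {A : Matrix (Fin m) (Fin n) ℝ}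
    (hA : IsRIP (2 * k) ε A) {u v : EuclideanSpace ℝ (Fin n)}
    (hu : SparseVec k u) (hv : SparseVec k v) (huR : ‖u‖ ≤ R) (hvR : ‖v‖ ≤ R) :
    |⟪u, v⟫ - ⟪matVecLin A u, matVecLin A v⟫| ≤ R ^ 2 * ε := by
  have hp := hA _ (sparseVec_add hu hv)
  have hm := hA _ (sparseVec_add hu (sparseVec_neg hv))
  rw [← sub_eq_add_neg] at hm
  change _ ≤ ‖matVecLin A (u + v)‖ ^ 2 ∧ ‖matVecLin A (u + v)‖ ^ 2 ≤ _ at hp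
  change _ ≤ ‖matVecLin A (u - v)‖ ^ 2 ∧ ‖matVecLin A (u - v)‖ ^ 2 ≤ _ at hm
  rw [map_add, norm_add_sq_real, norm_add_sq_real] at hp
  rw [map_sub, norm_sub_sq_real, norm_sub_sq_real] at hm
  have hu2 : ε * ‖u‖ ^ 2 ≤ ε * R ^ 2 := by gcongr
  have hv2 : ε * ‖v‖ ^ 2 ≤ ε * R ^ 2 := by gcongr
  rw [abs_le]
  constructor <;> linarith [hp.1, hp.2, hm.1, hm.2]

/-- RIP approximately preserves inner products of nonnegative combinations
`α = Σᵢ αᵢ yᵢ xᵢ`, `β = Σⱼ βⱼ y'ⱼ x'ⱼ` of `k`-sparse signed examples: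
`|⟨β, α⟩ − ⟨Aβ, Aα⟩| ≤ 3 C D R² ε`. -/
theorem rip_inner_product_combinations {m n k : ℕ} (ε : ℝ) (hε0 : 0 < ε) (hε1 : ε < 1)
    (A : Matrix (Fin m) (Fin n) ℝ) (hA : IsRIP (2 * k) ε A) (R : ℝ)
    (M N : ℕ) (x : Fin M → EuclideanSpace ℝ (Fin n)) (y : Fin M → ℝ)
    (x' : Fin N → EuclideanSpace ℝ (Fin n)) (y' : Fin N → ℝ)
    (hxk : ∀ i, SparseVec k (x i)) (hxR : ∀ i, ‖x i‖ ≤ R)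
    (hy : ∀ i, y i = -1 ∨ y i = 1)
    (hx'k : ∀ j, SparseVec k (x' j)) (hx'R : ∀ j, ‖x' j‖ ≤ R)
    (hy' : ∀ j, y' j = -1 ∨ y' j = 1)
    (α : Fin M → ℝ) (β : Fin N → ℝ) (C D : ℝ)
    (hα : ∀ i, 0 ≤ α i) (hβ : ∀ j, 0 ≤ β j)
    (hαC : ∑ i, α i ≤ C) (hβD : ∑ j, β j ≤ D) :
    |⟪∑ j, (β j * y' j) • x' j, ∑ i, (α i * y i) • x i⟫ -
        ⟪matVec A (∑ j, (β j * y' j) • x' j), matVec A (∑ i, (α i * y i) • x i)⟫| ≤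
      3 * C * D * R ^ 2 * ε := by
  change |_ - ⟪matVecLin A _, matVecLin A _⟫| ≤ _
  have hsign : ∀ t : ℝ, t = -1 ∨ t = 1 → |t| = 1 := by
    rintro t (rfl | rfl) <;> simp
  have hexp : ⟪∑ j, (β j * y' j) • x' j, ∑ i, (α i * y i) • x i⟫ -
        ⟪matVecLin A (∑ j, (β j * y' j) • x' j), matVecLin A (∑ i, (α i * y i) • x i)⟫ =
      ∑ j, ∑ i, ((β j * y' j) * (α i * y i)) *
        (⟪x' j, x i⟫ - ⟪matVecLin A (x' j), matVecLin A (x i)⟫) := by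
    simp only [map_sum, map_smul, sum_inner, inner_sum, real_inner_smul_left,
      real_inner_smul_right, ← sum_sub_distrib]
    rw [sum_comm]
    exact sum_congr rfl fun j _ => sum_congr rfl fun i _ => by ring
  have hC : 0 ≤ C := (sum_nonneg fun i _ => hα i).trans hαC
  have hD : 0 ≤ D := (sum_nonneg fun j _ => hβ j).trans hβD
  rw [hexp]
  calc _ ≤ ∑ j, ∑ i, (β j * α i) * (R ^ 2 * ε) := by
        refine (abs_sum_le_sum_abs _ _).trans (sum_le_sum fun j _ => ?_)
        refine (abs_sum_le_sum_abs _ _).trans (sum_le_sum fun i _ => ?_)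
        rw [abs_mul, abs_mul, abs_mul, abs_mul, hsign _ (hy i), hsign _ (hy' j),
          abs_of_nonneg (hα i), abs_of_nonneg (hβ j), mul_one, mul_one]
        exact mul_le_mul_of_nonneg_left
          (abs_defect_le hε0 hA (hx'k j) (hxk i) (hx'R j) (hxR i)) (mul_nonneg (hβ j) (hα i))
    _ = ((∑ j, β j) * ∑ i, α i) * (R ^ 2 * ε) := by
        rw [sum_mul_sum]
        simp only [sum_mul]
    _ ≤ (D * C) * (R ^ 2 * ε) := by
        gcongr
        exact sum_nonneg fun i _ => hα i
    _ ≤ 3 * C * D * R ^ 2 * ε := by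
        have : 0 ≤ (D * C) * (R ^ 2 * ε) := by positivity
        linarith
end
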